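/- Let A and B be essential line arrangements of d lines in P^2 having the same weak combinatorics, i.e. n_j(A) = n_j(B) for every j ≥ 2. If 2·m(A) ≥ d, where m(A) is the maximal multiplicity of an intersection point of A, then r(A) = r(B). (In particular, when 2·m(A) ≥ d the invariant r(A) is determined by the weak combinatorics of A.) -/

import Mathlib

open Classical MvPolynomial

variable {K : Type*} [Field K] [CharZero K] {ℓ : ℕ}

/-- A (central) hyperplane arrangement: a finite set of nonzero linear forms,
pairwise non-proportional. -/
def IsArrangement (A : Finset (MvPolynomial (Fin ℓ) K)) : Prop :=
  (∀ α ∈ A, α ≠ 0 ∧ α.IsHomogeneous 1) ∧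
    ∀ α ∈ A, ∀ β ∈ A, α ≠ β → ∀ c : K, α ≠ c • β

/-- The arrangement is essential: the common zero set of its forms is `{0}`. -/
def IsEssential (A : Finset (MvPolynomial (Fin ℓ) K)) : Prop :=
  ∀ v : Fin ℓ → K, (∀ α ∈ A, eval v α = 0) → v = 0

/-- The defining polynomial `Q(A)`. -/
noncomputable def Qpoly (A : Finset (MvPolynomial (Fin ℓ) K)) : MvPolynomial (Fin ℓ) K :=
  ∏ α ∈ A, α

/-- Apply a derivation `θ = Σ θ_j ∂_j` to a polynomial. -/
noncomputable def applyDer (θ : Fin ℓ → MvPolynomial (Fin ℓ) K)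
    (f : MvPolynomial (Fin ℓ) K) : MvPolynomial (Fin ℓ) K :=
  ∑ j, θ j * pderiv j f

/-- The minimal degree of a Jacobian relation `r(A)`. -/
noncomputable def mdr (A : Finset (MvPolynomial (Fin ℓ) K)) : ℕ :=
  sInf {r | ∃ θ : Fin ℓ → MvPolynomial (Fin ℓ) K, θ ≠ 0 ∧
    (∀ j, (θ j).IsHomogeneous r) ∧ applyDer θ (Qpoly A) = 0}

/-- The number of elements `|A^H|` of the restriction of `A` to `H`:
the number of distinct subspaces `H ∩ ker α_L`, `L ∈ A \ {H}`. -/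
noncomputable def restCard (A : Finset (MvPolynomial (Fin ℓ) K))
    (H : MvPolynomial (Fin ℓ) K) : ℕ :=
  ((A.erase H).image fun L => {v : Fin ℓ → K | eval v H = 0 ∧ eval v L = 0}).card

/-- The number `n_j(A)` of intersection points of multiplicity `j` of a line
arrangement `A` in `P^2`. An intersection point is encoded (bijectively) by the set
of lines of `A` passing through it, which has at least two elements. -/
noncomputable def nPoints (A : Finset (MvPolynomial (Fin 3) K)) (j : ℕ) : ℕ :=
  Set.ncard {T : Finset (MvPolynomial (Fin 3) K) |
    ∃ v : Fin 3 → K, v ≠ 0 ∧ T = A.filter (fun α => eval v α = 0) ∧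
      2 ≤ T.card ∧ T.card = j}

/-- The maximal multiplicity `m(A)` of an intersection point of `A`. -/
noncomputable def maxMult (A : Finset (MvPolynomial (Fin 3) K)) : ℕ :=
  sSup {j | 2 ≤ j ∧ nPoints A j ≠ 0}

/-- The global Tjurina number `τ(A) = Σ_{j ≥ 2} n_j(A)·(j−1)²` of a line arrangement. -/
noncomputable def tjurina (A : Finset (MvPolynomial (Fin 3) K)) : ℕ :=
  ∑ j ∈ Finset.range (A.card + 1), nPoints A j * (j - 1) ^ 2

/-- `τ(d,r)_max = (d−1)(d−r−1) + r² − C(2r−d+2, 2)`, for `d/2 ≤ r ≤ d−1`. -/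
def tauMax (d r : ℕ) : ℕ :=
  (d - 1) * (d - r - 1) + r ^ 2 - Nat.choose (2 * r - d + 2) 2

/-- A line arrangement `A` is maximal Tjurina of type `(d, r)` if it consists of `d`
lines, `r(A) = r` and `τ(A) = τ(d,r)_max`. -/
def IsMaxTjurina (A : Finset (MvPolynomial (Fin 3) K)) (d r : ℕ) : Prop :=
  A.card = d ∧ mdr A = r ∧ tjurina A = tauMax d r

/-!
Let `v` be a point of multiplicity `m` on an arrangement of `d` lines, with `d ≤ 2 m`. Multiplying
the constant field `v` by the equation of the `d - m` lines missing `v`, and correcting by a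
multiple of the Euler field, gives a Jacobian relation of degree `d - m`. Conversely, for a Jacobian
relation `θ` of degree `r < d - m` the polynomial `det (v, x, θ)` is nonzero of degree `r + 1` and
divisible by the `m` lines through `v`, so that `m ≤ r + 1`. Hence `r(A) = d - m` if `d < 2 m`, and
`r(A)` is `m - 1` or `m` if `d = 2 m`.

When `d = 2 m` and `r = m - 1`, this determinant is the product of the lines through `v`. It
vanishes at every intersection point of `A`, so all of these lie on lines through `v`: the point `v`
is modular. If `v` is modular, then conversely a logarithmic field of degree `m - 1` of the pencil
at `v` extends to `A` by adding multiples of `v`, one line at a time. Finally, counting the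
pairs formed by a line through `v` and a line off `v` shows that `v` is modular if and only if
`∑ j, n_j (j - 1) = (m - 1) + m ^ 2`, and this depends only on the weak combinatorics.
-/

open Matrix

section LinearForms

variable {σ R 𝕜 : Type*} [CommRing R] [Field 𝕜]

lemma prime_of_isHomogeneous_one {α : MvPolynomial σ 𝕜} (hα : α.IsHomogeneous 1) (h0 : α ≠ 0) :
    Prime α := by
  refine (irreducible_of_totalDegree_eq_one (hα.totalDegree h0) fun r hr => ?_).prime
  obtain ⟨m, hm⟩ := ne_zero_iff.mp h0
  refine isUnit_iff_ne_zero.mpr ?_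
  rintro rfl
  exact hm (zero_dvd_iff.mp (hr m))

lemma exists_eq_smul_of_dvd {α β : MvPolynomial σ 𝕜} (hα : α.IsHomogeneous 1)
    (hβ : β.IsHomogeneous 1) (h0 : β ≠ 0) (h : α ∣ β) : ∃ t : 𝕜, β = t • α := by
  obtain ⟨r, rfl⟩ := h
  have hdeg := totalDegree_mul_of_isDomain (left_ne_zero_of_mul h0) (right_ne_zero_of_mul h0)
  rw [hα.totalDegree (left_ne_zero_of_mul h0), hβ.totalDegree h0] at hdeg
  have hr : r = C (coeff 0 r) := totalDegree_eq_zero_iff_eq_C.mp (by omega)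
  exact ⟨coeff 0 r, by rw [hr, mul_comm, coeff_C, if_pos rfl, smul_eq_C_mul]⟩

/-- The restriction of polynomials to the hyperplane `α = 0`, realised as the endomorphism induced
by the linear projection from the point `v` onto that hyperplane. It is meaningful for a linear
form `α` that does not vanish at `v`. -/
noncomputable def projFrom (v : σ → 𝕜) (α : MvPolynomial σ 𝕜) :
    MvPolynomial σ 𝕜 →ₐ[𝕜] MvPolynomial σ 𝕜 :=
  aeval fun j => X j - C (v j / eval v α) * α

lemma dvd_sub_projFrom (v : σ → 𝕜) (α P : MvPolynomial σ 𝕜) : α ∣ P - projFrom v α P := by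
  have hX : (Ideal.Quotient.mkₐ 𝕜 (Ideal.span {α})).comp (projFrom v α) =
      Ideal.Quotient.mkₐ 𝕜 (Ideal.span {α}) := by
    ext j
    refine Ideal.Quotient.eq.mpr (Ideal.mem_span_singleton.mpr ?_)
    simp [projFrom]
  exact Ideal.mem_span_singleton.mp (Ideal.Quotient.eq.mp (DFunLike.congr_fun hX P).symm)

lemma mem_span_X_of_isHomogeneous_one {α : MvPolynomial σ R} (hα : α.IsHomogeneous 1) :
    α ∈ Submodule.span R (Set.range X) := by
  rwa [← homogeneousSubmodule_one_eq_span_X, mem_homogeneousSubmodule]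

lemma eval_smul_of_isHomogeneous_one {α : MvPolynomial σ R} (hα : α.IsHomogeneous 1) (t : R)
    (v : σ → R) : eval (t • v) α = t * eval v α := by
  have hspan := mem_span_X_of_isHomogeneous_one hα
  clear hα
  induction hspan using Submodule.span_induction with
  | mem _ hX =>
    obtain ⟨j, rfl⟩ := hX
    simp
  | zero => simp
  | add β γ _ _ hβ hγ => rw [map_add, map_add, hβ, hγ, mul_add]
  | smul r β _ hβ => rw [smul_eval, smul_eval, hβ, mul_left_comm]

lemma projFrom_of_isHomogeneous_one (v : σ → 𝕜) (α : MvPolynomial σ 𝕜) {β : MvPolynomial σ 𝕜}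
    (hβ : β.IsHomogeneous 1) : projFrom v α β = β - C (eval v β / eval v α) * α := by
  have hspan := mem_span_X_of_isHomogeneous_one hβ
  clear hβ
  induction hspan using Submodule.span_induction with
  | mem _ hX =>
    obtain ⟨j, rfl⟩ := hX
    rw [projFrom, aeval_X, eval_X]
  | zero => simp
  | add β₁ β₂ _ _ h₁ h₂ =>
    rw [map_add, map_add, h₁, h₂, add_div, C_add]
    ring
  | smul r β _ h =>
    rw [map_smul, h, smul_eval, mul_div_assoc, C_mul, smul_sub, smul_eq_C_mul, smul_eq_C_mul,
      mul_assoc]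

section Projection

variable {v : σ → 𝕜} {α : MvPolynomial σ 𝕜} (hα : α.IsHomogeneous 1) (hv : eval v α ≠ 0)
include hα hv

lemma projFrom_self : projFrom v α α = 0 := by
  rw [projFrom_of_isHomogeneous_one v α hα, div_self hv, C_1, one_mul, sub_self]

lemma dvd_iff_projFrom_eq_zero {P : MvPolynomial σ 𝕜} : α ∣ P ↔ projFrom v α P = 0 := by
  constructor
  · rintro ⟨q, rfl⟩
    rw [map_mul, projFrom_self hα hv, zero_mul]
  · intro h
    simpa [h] using dvd_sub_projFrom v α P

end Projection

variable [Fintype σ]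

/-- The linear form `∑ j, c j * x j` with coefficient vector `c`, as a linear map in `c`. -/
noncomputable def linForm : (σ → R) →ₗ[R] MvPolynomial σ R :=
  Fintype.linearCombination R X

lemma linForm_eq_dotProduct (c : σ → R) : linForm c = (C ∘ c) ⬝ᵥ X := by
  simp only [linForm, Fintype.linearCombination_apply, smul_eq_C_mul, dotProduct,
    Function.comp_apply]

lemma eval_linForm (v c : σ → R) : eval v (linForm c) = c ⬝ᵥ v := by
  simp [linForm_eq_dotProduct, dotProduct]

lemma exists_dotProduct_eq_one {v : σ → 𝕜} (hv : v ≠ 0) : ∃ u : σ → 𝕜, v ⬝ᵥ u = 1 := by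
  obtain ⟨j, hj⟩ := Function.ne_iff.mp hv
  exact ⟨Pi.single j (v j)⁻¹, by rw [dotProduct_single, mul_inv_cancel₀ hj]⟩

lemma exists_eq_linForm {α : MvPolynomial σ R} (hα : α.IsHomogeneous 1) :
    ∃ c, α = linForm c := by
  have hspan := mem_span_X_of_isHomogeneous_one hα
  rw [← Fintype.range_linearCombination] at hspan
  obtain ⟨c, rfl⟩ := hspan
  exact ⟨c, rfl⟩

lemma linForm_eq_zero_iff {c : σ → R} : linForm c = 0 ↔ c = 0 := by
  refine ⟨fun h => funext fun j => ?_, by rintro rfl; exact map_zero _⟩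
  simpa [eval_linForm] using congrArg (eval (Pi.single j 1)) h

end LinearForms

section Arrangements

variable {𝕜 : Type*} [Field 𝕜] {A B : Finset (MvPolynomial (Fin ℓ) 𝕜)} {P : MvPolynomial (Fin ℓ) 𝕜}

namespace IsArrangement

lemma subset (hA : IsArrangement A) (h : B ⊆ A) : IsArrangement B :=
  ⟨fun α hα => hA.1 α (h hα), fun α hα β hβ => hA.2 α (h hα) β (h hβ)⟩

lemma prime (hA : IsArrangement A) {α : MvPolynomial (Fin ℓ) 𝕜} (hα : α ∈ A) : Prime α :=
  prime_of_isHomogeneous_one (hA.1 α hα).2 (hA.1 α hα).1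

lemma isRelPrime (hA : IsArrangement A) {α β : MvPolynomial (Fin ℓ) 𝕜} (hα : α ∈ A) (hβ : β ∈ A)
    (h : α ≠ β) : IsRelPrime α β := by
  refine (hA.prime hα).irreducible.isRelPrime_iff_not_dvd.mpr fun hd => ?_
  obtain ⟨t, ht⟩ := exists_eq_smul_of_dvd (hA.1 α hα).2 (hA.1 β hβ).2 (hA.1 β hβ).1 hd
  exact hA.2 β hβ α hα h.symm t ht

lemma Qpoly_dvd (hA : IsArrangement A) (h : ∀ α ∈ A, α ∣ P) : Qpoly A ∣ P :=
  Finset.prod_dvd_of_isRelPrime (fun _ hα _ hβ => hA.isRelPrime hα hβ) h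

lemma isHomogeneous_Qpoly (hA : IsArrangement A) : (Qpoly A).IsHomogeneous A.card := by
  simpa [Qpoly] using IsHomogeneous.prod A id (fun _ => 1) fun α hα => (hA.1 α hα).2

lemma Qpoly_ne_zero (hA : IsArrangement A) : Qpoly A ≠ 0 :=
  Finset.prod_ne_zero_iff.mpr fun α hα => (hA.1 α hα).1

end IsArrangement

lemma eval_Qpoly_eq_zero_iff {q : Fin ℓ → 𝕜} : eval q (Qpoly A) = 0 ↔ ∃ α ∈ A, eval q α = 0 := by
  rw [Qpoly, map_prod, Finset.prod_eq_zero_iff]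

lemma Qpoly_insert {α : MvPolynomial (Fin ℓ) 𝕜} (h : α ∉ A) :
    Qpoly (insert α A) = α * Qpoly A :=
  Finset.prod_insert h

end Arrangements

section Derivations

variable {𝕜 : Type*} [Field 𝕜] {A : Finset (MvPolynomial (Fin ℓ) 𝕜)}
  {θ : Fin ℓ → MvPolynomial (Fin ℓ) 𝕜}

lemma applyDer_eq_dotProduct (θ : Fin ℓ → MvPolynomial (Fin ℓ) 𝕜) (f : MvPolynomial (Fin ℓ) 𝕜) :
    applyDer θ f = θ ⬝ᵥ fun j => pderiv j f :=
  rfl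

lemma applyDer_add_smul (θ η : Fin ℓ → MvPolynomial (Fin ℓ) 𝕜) (P f : MvPolynomial (Fin ℓ) 𝕜) :
    applyDer (θ + P • η) f = applyDer θ f + P * applyDer η f := by
  simp only [applyDer_eq_dotProduct, add_dotProduct, smul_dotProduct, smul_eq_mul]

lemma applyDer_add (θ : Fin ℓ → MvPolynomial (Fin ℓ) 𝕜) (f g : MvPolynomial (Fin ℓ) 𝕜) :
    applyDer θ (f + g) = applyDer θ f + applyDer θ g := by
  simp only [applyDer, map_add, mul_add, Finset.sum_add_distrib]

lemma applyDer_smul (θ : Fin ℓ → MvPolynomial (Fin ℓ) 𝕜) (t : 𝕜) (f : MvPolynomial (Fin ℓ) 𝕜) :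
    applyDer θ (t • f) = t • applyDer θ f := by
  simp only [applyDer, Derivation.map_smul, mul_smul_comm, Finset.smul_sum]

lemma applyDer_mul (θ : Fin ℓ → MvPolynomial (Fin ℓ) 𝕜) (f g : MvPolynomial (Fin ℓ) 𝕜) :
    applyDer θ (f * g) = applyDer θ f * g + f * applyDer θ g := by
  simp only [applyDer, Derivation.leibniz, smul_eq_mul, Finset.sum_mul, Finset.mul_sum,
    ← Finset.sum_add_distrib]
  exact Finset.sum_congr rfl fun j _ => by ring

lemma applyDer_linForm (θ : Fin ℓ → MvPolynomial (Fin ℓ) 𝕜) (c : Fin ℓ → 𝕜) :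
    applyDer θ (linForm c) = (C ∘ c) ⬝ᵥ θ := by
  have hpderiv (j : Fin ℓ) : pderiv j (linForm c) = C (c j) := by
    simp [linForm_eq_dotProduct, dotProduct, Pi.single_apply]
  simp only [applyDer, hpderiv, dotProduct, Function.comp_apply, mul_comm]

lemma applyDer_C_comp (v : Fin ℓ → 𝕜) {α : MvPolynomial (Fin ℓ) 𝕜}
    (hα : α.IsHomogeneous 1) :
    applyDer (C ∘ v) α = C (eval v α) := by
  obtain ⟨c, rfl⟩ := exists_eq_linForm hα
  simp [applyDer_linForm, eval_linForm, dotProduct]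

lemma applyDer_Qpoly_eq_zero (h : ∀ α ∈ A, applyDer θ α = 0) : applyDer θ (Qpoly A) = 0 := by
  induction A using Finset.induction_on with
  | empty => simp [Qpoly, applyDer]
  | insert α A hα ih =>
    rw [Qpoly_insert hα, applyDer_mul, h α (Finset.mem_insert_self α A),
      ih fun β hβ => h β (Finset.mem_insert_of_mem hβ), zero_mul, mul_zero, add_zero]

/-- The vector field `θ` is logarithmic along `A`, i.e. tangent to each hyperplane of `A`. -/
def IsLogarithmic (A : Finset (MvPolynomial (Fin ℓ) 𝕜)) (θ : Fin ℓ → MvPolynomial (Fin ℓ) 𝕜) :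
    Prop :=
  ∀ α ∈ A, α ∣ applyDer θ α

lemma IsLogarithmic.Qpoly_dvd (h : IsLogarithmic A θ) : Qpoly A ∣ applyDer θ (Qpoly A) := by
  induction A using Finset.induction_on with
  | empty => exact one_dvd _
  | insert α A hα ih =>
    rw [Qpoly_insert hα, applyDer_mul]
    exact dvd_add (mul_dvd_mul_right (h α (Finset.mem_insert_self α A)) _)
      (mul_dvd_mul_left α (ih fun β hβ => h β (Finset.mem_insert_of_mem hβ)))

lemma isLogarithmic_of_applyDer_Qpoly_eq_zero (hA : IsArrangement A)
    (h : applyDer θ (Qpoly A) = 0) : IsLogarithmic A θ := by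
  intro α hα
  have hrest : IsRelPrime α (∏ β ∈ A.erase α, β) := IsRelPrime.prod_right fun β hβ =>
    hA.isRelPrime hα (Finset.mem_of_mem_erase hβ) (Finset.ne_of_mem_erase hβ).symm
  rw [Qpoly, ← Finset.mul_prod_erase A (fun β => β) hα, applyDer_mul] at h
  refine hrest.dvd_of_dvd_mul_right ?_
  exact (dvd_add_left (dvd_mul_right α _)).mp (h ▸ dvd_zero α)

/-- The degrees of the nonzero homogeneous Jacobian relations of `A`; `mdr A` is its infimum. -/
def jacobianDegrees (A : Finset (MvPolynomial (Fin ℓ) 𝕜)) : Set ℕ :=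
  {r | ∃ θ : Fin ℓ → MvPolynomial (Fin ℓ) 𝕜, θ ≠ 0 ∧ (∀ j, (θ j).IsHomogeneous r) ∧
    applyDer θ (Qpoly A) = 0}

lemma homogeneousComponent_mul {σ R : Type*} [CommRing R] {P F : MvPolynomial σ R} {j : ℕ}
    (hF : F.IsHomogeneous j) (i : ℕ) :
    homogeneousComponent (i + j) (P * F) = homogeneousComponent i P * F := by
  let _ : GradedAlgebra (homogeneousSubmodule σ R) := gradedAlgebra
  have hdecompose (P : MvPolynomial σ R) (n : ℕ) :
      (DirectSum.decompose (homogeneousSubmodule σ R) P n : MvPolynomial σ R) =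
        homogeneousComponent n P :=
    decomposition.decompose'_apply P n
  have h := DirectSum.coe_decompose_mul_add_of_right_mem (homogeneousSubmodule σ R)
    (i := i) (j := j) (a := P) (b := F) hF
  rwa [hdecompose, hdecompose] at h

lemma homogeneousComponent_applyDer {f : MvPolynomial (Fin ℓ) 𝕜} {n : ℕ} (hf : f.IsHomogeneous n)
    (k : ℕ) : homogeneousComponent (k + (n - 1)) (applyDer θ f) =
      applyDer (fun j => homogeneousComponent k (θ j)) f := by
  simp only [applyDer, map_sum, homogeneousComponent_mul hf.pderiv]

variable [CharZero 𝕜]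

lemma eq_zero_of_applyDer_Qpoly_eq_zero (hA : IsArrangement A) (hne : A.Nonempty)
    (hX : ∀ i j, X i * θ j = X j * θ i) (h : applyDer θ (Qpoly A) = 0) : θ = 0 := by
  ext1 i
  have hEuler : θ i * (A.card • Qpoly A) = 0 := calc
    θ i * (A.card • Qpoly A) = ∑ j, X j * θ i * pderiv j (Qpoly A) := by
      rw [← hA.isHomogeneous_Qpoly.sum_X_mul_pderiv, Finset.mul_sum]
      exact Finset.sum_congr rfl fun j _ => by ring
    _ = X i * applyDer θ (Qpoly A) := by
      rw [applyDer, Finset.mul_sum]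
      exact Finset.sum_congr rfl fun j _ => by rw [← hX i j, mul_assoc]
    _ = 0 := by rw [h, mul_zero]
  exact (mul_eq_zero.mp hEuler).resolve_right
    (smul_ne_zero hne.card_ne_zero hA.Qpoly_ne_zero)

-- Subtracting a multiple of the Euler field `X` changes `θ` into a Jacobian relation.
lemma IsLogarithmic.exists_applyDer_eq_zero (hA : IsArrangement A) (hne : A.Nonempty)
    (h : IsLogarithmic A θ) : ∃ η, applyDer η (Qpoly A) = 0 ∧
      ∀ i j, X i * η j - X j * η i = X i * θ j - X j * θ i := by
  obtain ⟨q, hq⟩ := h.Qpoly_dvd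
  have hcard : C (A.card : 𝕜)⁻¹ * (A.card : MvPolynomial (Fin ℓ) 𝕜) = 1 := by
    rw [← map_natCast (C : 𝕜 →+* MvPolynomial (Fin ℓ) 𝕜), ← C_mul,
      inv_mul_cancel₀ (Nat.cast_ne_zero.mpr hne.card_ne_zero), C_1]
  have hEuler : applyDer X (Qpoly A) = A.card • Qpoly A :=
    hA.isHomogeneous_Qpoly.sum_X_mul_pderiv
  refine ⟨θ + (-C (A.card : 𝕜)⁻¹ * q) • X, ?_, fun i j => ?_⟩
  · rw [applyDer_add_smul, hq, hEuler, nsmul_eq_mul]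
    linear_combination -Qpoly A * q * hcard
  · simp only [Pi.add_apply, Pi.smul_apply, smul_eq_mul]
    ring

lemma IsLogarithmic.mem_jacobianDegrees (hA : IsArrangement A) (hne : A.Nonempty)
    (h : IsLogarithmic A θ) {k : ℕ} {i j : Fin ℓ}
    (hk : homogeneousComponent (k + 1) (X i * θ j - X j * θ i) ≠ 0) : k ∈ jacobianDegrees A := by
  obtain ⟨η, hη, hminor⟩ := h.exists_applyDer_eq_zero hA hne
  refine ⟨fun j => homogeneousComponent k (η j), fun h0 => hk ?_,
    fun j => homogeneousComponent_isHomogeneous k _, ?_⟩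
  · rw [← hminor, mul_comm, mul_comm (X j), map_sub, homogeneousComponent_mul (isHomogeneous_X 𝕜 i),
      homogeneousComponent_mul (isHomogeneous_X 𝕜 j), congrFun h0 i, congrFun h0 j]
    simp
  · rw [← homogeneousComponent_applyDer hA.isHomogeneous_Qpoly, hη, map_zero]

end Derivations

section LinearSpaces

/-- A finite linear space with point set `A` and set of blocks `P`: two distinct points lie on
exactly one block, and a block has at least two points. The lines of an arrangement are the points
of such a space, whose blocks are the intersection points of the arrangement. -/
structure IsLinearSpace {ι : Type*} (A : Finset ι) (P : Finset (Finset ι)) : Prop where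
  subset : ∀ T ∈ P, T ⊆ A
  one_lt_card : ∀ T ∈ P, 1 < T.card
  exists_mem : ∀ a ∈ A, ∀ b ∈ A, a ≠ b → ∃ T ∈ P, a ∈ T ∧ b ∈ T
  eq_of_mem : ∀ T ∈ P, ∀ T' ∈ P, ∀ a ∈ T ∩ T', ∀ b ∈ T ∩ T', a ≠ b → T = T'

namespace IsLinearSpace

variable {ι : Type*} {A T T₀ : Finset ι} {P : Finset (Finset ι)} (h : IsLinearSpace A P)
include h

lemma card_inter_le_one (hT : T ∈ P) (hT₀ : T₀ ∈ P) (hne : T ≠ T₀) : (T ∩ T₀).card ≤ 1 :=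
  Finset.card_le_one.mpr fun a ha b hb => not_not.mp (mt (h.eq_of_mem T hT T₀ hT₀ a ha b hb) hne)

lemma sum_card_inter_mul_card_sdiff (hT₀ : T₀ ∈ P) :
    ∑ T ∈ P, (T ∩ T₀).card * (T \ T₀).card = T₀.card * (A.card - T₀.card) := by
  have hdisj : (P : Set (Finset ι)).PairwiseDisjoint fun T => (T ∩ T₀) ×ˢ (T \ T₀) := by
    intro T hT T' hT' hne
    refine Finset.disjoint_left.mpr fun ⟨a, b⟩ hab hab' => hne ?_
    simp only [Finset.mem_product, Finset.mem_inter, Finset.mem_sdiff] at hab hab'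
    exact h.eq_of_mem T hT T' hT' a (Finset.mem_inter.mpr ⟨hab.1.1, hab'.1.1⟩) b
      (Finset.mem_inter.mpr ⟨hab.2.1, hab'.2.1⟩) (ne_of_mem_of_not_mem hab.1.2 hab.2.2)
  have hunion : (P.biUnion fun T => (T ∩ T₀) ×ˢ (T \ T₀)) = T₀ ×ˢ (A \ T₀) := by
    ext ⟨a, b⟩
    simp only [Finset.mem_biUnion, Finset.mem_product, Finset.mem_inter, Finset.mem_sdiff]
    constructor
    · rintro ⟨T, hT, ha, hb⟩
      exact ⟨ha.2, h.subset T hT hb.1, hb.2⟩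
    · rintro ⟨ha, hbA, hb⟩
      obtain ⟨T, hT, haT, hbT⟩ :=
        h.exists_mem a (h.subset T₀ hT₀ ha) b hbA (ne_of_mem_of_not_mem ha hb)
      exact ⟨T, hT, ⟨haT, ha⟩, hbT, hb⟩
  rw [← Finset.card_sdiff_of_subset (h.subset T₀ hT₀), ← Finset.card_product, ← hunion,
    Finset.card_biUnion hdisj]
  simp only [Finset.card_product]

lemma sum_card_sub_one (hT₀ : T₀ ∈ P) :
    ∑ T ∈ P, (T.card - 1) = (T₀.card - 1) + T₀.card * (A.card - T₀.card) +
      ∑ T ∈ P with Disjoint T T₀, (T.card - 1) := by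
  have hself : ¬Disjoint T₀ T₀ := by
    rw [disjoint_self, Finset.bot_eq_empty, ← Finset.card_eq_zero]
    have := h.one_lt_card T₀ hT₀
    omega
  have hother : ∀ T ∈ P.erase T₀, T.card - 1 = (T ∩ T₀).card * (T \ T₀).card +
      if Disjoint T T₀ then T.card - 1 else 0 := by
    intro T hT
    obtain ⟨hne, hT⟩ := Finset.mem_erase.mp hT
    split_ifs with hdisj
    · rw [Finset.disjoint_iff_inter_eq_empty.mp hdisj, Finset.card_empty, zero_mul, zero_add]
    · have hpos : 0 < (T ∩ T₀).card :=
        Finset.card_pos.mpr (Finset.not_disjoint_iff_nonempty_inter.mp hdisj)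
      have hone : (T ∩ T₀).card = 1 := le_antisymm (h.card_inter_le_one hT hT₀ hne) hpos
      have := Finset.card_inter_add_card_sdiff T T₀
      rw [hone, one_mul, add_zero]
      omega
  rw [← h.sum_card_inter_mul_card_sdiff hT₀, Finset.sum_filter, ← Finset.add_sum_erase P _ hT₀,
    ← Finset.add_sum_erase P (fun T => (T ∩ T₀).card * (T \ T₀).card) hT₀,
    ← Finset.add_sum_erase P (fun T => if Disjoint T T₀ then T.card - 1 else 0) hT₀,
    if_neg hself, Finset.sdiff_self, Finset.card_empty, mul_zero, zero_add, zero_add, add_assoc,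
    ← Finset.sum_add_distrib, Finset.sum_congr rfl hother]

lemma sum_card_sub_one_eq_iff (hT₀ : T₀ ∈ P) :
    ∑ T ∈ P, (T.card - 1) = (T₀.card - 1) + T₀.card * (A.card - T₀.card) ↔
      ∀ T ∈ P, ¬Disjoint T T₀ := by
  rw [h.sum_card_sub_one hT₀, Nat.add_eq_left, Finset.sum_eq_zero_iff]
  refine forall_congr' fun T => ?_
  rw [Finset.mem_filter, and_imp]
  refine forall_congr' fun hT => imp_congr_right fun _ => ?_
  have := h.one_lt_card T hT
  exact iff_false_intro (by omega)

end IsLinearSpace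

end LinearSpaces

section CrossProduct

lemma dotProduct_cross_smul {R : Type*} [CommRing R] (a b d c : Fin 3 → R) :
    (a ⬝ᵥ b ⨯₃ d) • c =
      (c ⬝ᵥ a) • b ⨯₃ d + (c ⬝ᵥ b) • d ⨯₃ a + (c ⬝ᵥ d) • a ⨯₃ b := by
  ext i
  fin_cases i <;> simp [cross_apply, dotProduct, Fin.sum_univ_three] <;> ring

lemma exists_eq_smul_of_dotProduct_eq_zero {𝕜 : Type*} [Field 𝕜] {a b q r : Fin 3 → 𝕜}
    (hab : LinearIndependent 𝕜 ![a, b]) (hq : q ≠ 0) (haq : a ⬝ᵥ q = 0) (hbq : b ⬝ᵥ q = 0)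
    (har : a ⬝ᵥ r = 0) (hbr : b ⬝ᵥ r = 0) : ∃ t : 𝕜, r = t • q := by
  have hn : a ⨯₃ b ≠ 0 := crossProduct_ne_zero_iff_linearIndependent.mpr hab
  have hline {s : Fin 3 → 𝕜} (has : a ⬝ᵥ s = 0) (hbs : b ⬝ᵥ s = 0) : ∃ t : 𝕜, t • a ⨯₃ b = s := by
    have hcross : a ⨯₃ b ⨯₃ s = 0 := by
      rw [cross_cross_eq_smul_sub_smul, has, hbs, zero_smul, zero_smul, sub_zero]
    by_contra! hne
    exact crossProduct_ne_zero_iff_linearIndependent.mpr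
      ((LinearIndependent.pair_iff' hn).mpr hne) hcross
  obtain ⟨s, rfl⟩ := hline haq hbq
  obtain ⟨t, rfl⟩ := hline har hbr
  exact ⟨t / s, by rw [smul_smul, div_mul_cancel₀ t (left_ne_zero_of_smul hq)]⟩

end CrossProduct

section Points

variable {𝕜 : Type*} [Field 𝕜] {A : Finset (MvPolynomial (Fin 3) 𝕜)} {v q : Fin 3 → 𝕜}
  {θ : Fin 3 → MvPolynomial (Fin 3) 𝕜} {α β γ : MvPolynomial (Fin 3) 𝕜} {k : ℕ}

/-- The lines of `A` through the point of the projective plane with coordinate vector `v`. -/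
noncomputable def linesThrough (A : Finset (MvPolynomial (Fin 3) 𝕜)) (v : Fin 3 → 𝕜) :
    Finset (MvPolynomial (Fin 3) 𝕜) :=
  A.filter fun α => eval v α = 0

/-- The lines of `A` that miss the point of the projective plane with coordinate vector `v`. -/
noncomputable def linesOff (A : Finset (MvPolynomial (Fin 3) 𝕜)) (v : Fin 3 → 𝕜) :
    Finset (MvPolynomial (Fin 3) 𝕜) :=
  A.filter fun α => eval v α ≠ 0

lemma mem_linesThrough : α ∈ linesThrough A v ↔ α ∈ A ∧ eval v α = 0 :=
  Finset.mem_filter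

lemma mem_linesOff : α ∈ linesOff A v ↔ α ∈ A ∧ eval v α ≠ 0 :=
  Finset.mem_filter

lemma linesThrough_subset : linesThrough A v ⊆ A :=
  Finset.filter_subset _ A

lemma linesOff_subset : linesOff A v ⊆ A :=
  Finset.filter_subset _ A

lemma linesThrough_union_linesOff : linesThrough A v ∪ linesOff A v = A :=
  Finset.filter_union_filter_not_eq _ A

lemma card_linesThrough_add_card_linesOff :
    (linesThrough A v).card + (linesOff A v).card = A.card :=
  Finset.card_filter_add_card_filter_not _

lemma IsArrangement.eq_smul_of_eval_eq_zero {r : Fin 3 → 𝕜} (hA : IsArrangement A) (hα : α ∈ A)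
    (hβ : β ∈ A) (hne : α ≠ β) (hq : q ≠ 0) (hαq : eval q α = 0) (hβq : eval q β = 0)
    (hαr : eval r α = 0) (hβr : eval r β = 0) : ∃ t : 𝕜, r = t • q := by
  obtain ⟨a, rfl⟩ := exists_eq_linForm (hA.1 α hα).2
  obtain ⟨b, rfl⟩ := exists_eq_linForm (hA.1 β hβ).2
  rw [eval_linForm] at hαq hβq hαr hβr
  have ha : a ≠ 0 := mt linForm_eq_zero_iff.mpr (hA.1 _ hα).1
  have hab : LinearIndependent 𝕜 ![a, b] := (LinearIndependent.pair_iff' ha).mpr fun t ht =>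
    hA.2 _ hβ _ hα hne.symm t (by rw [← ht, map_smul])
  exact exists_eq_smul_of_dotProduct_eq_zero hab hq hαq hβq hαr hβr

lemma exists_eq_smul_of_eval_eq_zero {r : Fin 3 → 𝕜} (hqr : LinearIndependent 𝕜 ![q, r])
    (hα : α.IsHomogeneous 1) (h0 : α ≠ 0) (hβ : β.IsHomogeneous 1) (hαq : eval q α = 0)
    (hαr : eval r α = 0) (hβq : eval q β = 0) (hβr : eval r β = 0) : ∃ t : 𝕜, β = t • α := by
  obtain ⟨a, rfl⟩ := exists_eq_linForm hα
  obtain ⟨b, rfl⟩ := exists_eq_linForm hβ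
  rw [eval_linForm, dotProduct_comm] at hαq hαr hβq hβr
  obtain ⟨t, rfl⟩ := exists_eq_smul_of_dotProduct_eq_zero hqr (mt linForm_eq_zero_iff.mpr h0)
    hαq hαr hβq hβr
  exact ⟨t, map_smul _ _ _⟩

lemma exists_ne_zero_eval_eq_zero (hα : α.IsHomogeneous 1) (hβ : β.IsHomogeneous 1) :
    ∃ q : Fin 3 → 𝕜, q ≠ 0 ∧ eval q α = 0 ∧ eval q β = 0 := by
  obtain ⟨a, rfl⟩ := exists_eq_linForm hα
  obtain ⟨b, rfl⟩ := exists_eq_linForm hβ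
  obtain ⟨q, hq, hab⟩ := exists_mulVec_eq_zero_iff.mpr
    (det_zero_of_row_eq (M := ![a, b, b]) (i := 1) (j := 2) (by decide) rfl)
  refine ⟨q, hq, ?_, ?_⟩ <;> rw [eval_linForm]
  exacts [congrFun hab 0, congrFun hab 1]

/-- The determinant of the three vectors `v`, `x` and `θ(x)`: it vanishes where the vector field
`θ` is tangent to the lines through `v`. -/
noncomputable def pencilDet (v : Fin 3 → 𝕜) (θ : Fin 3 → MvPolynomial (Fin 3) 𝕜) :
    MvPolynomial (Fin 3) 𝕜 :=
  (C ∘ v) ⬝ᵥ X ⨯₃ θ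

lemma isHomogeneous_X_cross (hθ : ∀ j, (θ j).IsHomogeneous k) (i : Fin 3) :
    ((X ⨯₃ θ) i).IsHomogeneous (k + 1) := by
  have hXθ (i j : Fin 3) : (X i * θ j).IsHomogeneous (k + 1) := by
    rw [add_comm]
    exact (isHomogeneous_X 𝕜 i).mul (hθ j)
  rw [cross_apply]
  fin_cases i <;> exact (hXθ _ _).sub (hXθ _ _)

lemma isHomogeneous_pencilDet (hθ : ∀ j, (θ j).IsHomogeneous k) :
    (pencilDet v θ).IsHomogeneous (k + 1) :=
  IsHomogeneous.sum _ _ _ fun i _ => (isHomogeneous_X_cross hθ i).C_mul _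

lemma pencilDet_smul (v c : Fin 3 → 𝕜) (θ : Fin 3 → MvPolynomial (Fin 3) 𝕜) (i : Fin 3) :
    pencilDet v θ * C (c i) = C (eval v (linForm c)) * (X ⨯₃ θ) i +
      linForm c * (θ ⨯₃ (C ∘ v)) i + applyDer θ (linForm c) * ((C ∘ v) ⨯₃ X) i := by
  have h := congrFun (dotProduct_cross_smul (C ∘ v) X θ (C ∘ c)) i
  have hdot : (C ∘ c) ⬝ᵥ (C ∘ v) = C (σ := Fin 3) (eval v (linForm c)) := by
    simp [eval_linForm, dotProduct]
  rwa [hdot, ← linForm_eq_dotProduct, ← applyDer_linForm θ] at h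

lemma dvd_pencilDet (hα : α.IsHomogeneous 1) (h0 : α ≠ 0) (hv : eval v α = 0)
    (hθ : α ∣ applyDer θ α) : α ∣ pencilDet v θ := by
  obtain ⟨c, rfl⟩ := exists_eq_linForm hα
  obtain ⟨i, hi⟩ := Function.ne_iff.mp (mt linForm_eq_zero_iff.mpr h0)
  have hunit : IsUnit (C (σ := Fin 3) (c i)) := (isUnit_iff_ne_zero.mpr hi).map C
  rw [← hunit.dvd_mul_right, pencilDet_smul, hv, C_0, zero_mul, zero_add]
  exact dvd_add (dvd_mul_right _ _) (dvd_mul_of_dvd_left hθ _)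

lemma dvd_X_cross_of_pencilDet_eq_zero (hα : α.IsHomogeneous 1) (hv : eval v α ≠ 0)
    (hθ : α ∣ applyDer θ α) (h : pencilDet v θ = 0) (i : Fin 3) : α ∣ (X ⨯₃ θ) i := by
  obtain ⟨c, rfl⟩ := exists_eq_linForm hα
  have hunit : IsUnit (C (σ := Fin 3) (eval v (linForm c))) := (isUnit_iff_ne_zero.mpr hv).map C
  have hcramer := pencilDet_smul v c θ i
  rw [h, zero_mul, add_assoc, eq_comm, add_eq_zero_iff_eq_neg] at hcramer
  rw [← hunit.dvd_mul_left, hcramer, dvd_neg]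
  exact dvd_add (dvd_mul_right _ _) (dvd_mul_of_dvd_left hθ _)

lemma eq_zero_of_dvd_of_X_dotProduct_eq_zero {σ R : Type*} [Fintype σ] [CommRing R] [IsDomain R]
    {N : σ → MvPolynomial σ R} {Q : MvPolynomial σ R} (hN : X ⬝ᵥ N = 0)
    (hdvd : ∀ i, Q ∣ N i) (hdeg : ∀ i, (N i).totalDegree ≤ Q.totalDegree) : N = 0 := by
  have hconst (i : σ) : ∃ u : R, N i = Q * C u := by
    obtain ⟨q, hq⟩ := hdvd i
    rcases eq_or_ne (N i) 0 with h0 | h0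
    · exact ⟨0, by rw [h0, C_0, mul_zero]⟩
    · have hd := hdeg i
      rw [hq] at h0 hd
      rw [totalDegree_mul_of_isDomain (left_ne_zero_of_mul h0) (right_ne_zero_of_mul h0)] at hd
      exact ⟨_, hq.trans (congrArg _ (totalDegree_eq_zero_iff_eq_C.mp (by omega)))⟩
  choose u hu using hconst
  have hprod : Q * linForm u = 0 := by
    rw [linForm_eq_dotProduct, dotProduct, Finset.mul_sum, ← hN, dotProduct]
    exact Finset.sum_congr rfl fun i _ => by rw [hu, Function.comp_apply]; ring
  ext1 i
  rw [hu]
  rcases mul_eq_zero.mp hprod with hQ | hlin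
  · rw [hQ, zero_mul, Pi.zero_apply]
  · rw [linForm_eq_zero_iff.mp hlin, Pi.zero_apply, C_0, mul_zero, Pi.zero_apply]

/-- A point is modular if every intersection point of `A` lies on a line of `A` through it. -/
def IsModularPoint (A : Finset (MvPolynomial (Fin 3) 𝕜)) (v : Fin 3 → 𝕜) : Prop :=
  ∀ q : Fin 3 → 𝕜, q ≠ 0 → 2 ≤ (linesThrough A q).card → ∃ γ ∈ linesThrough A v, eval q γ = 0

lemma eval_pencilDet (q v : Fin 3 → 𝕜) (θ : Fin 3 → MvPolynomial (Fin 3) 𝕜) :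
    eval q (pencilDet v θ) = v ⬝ᵥ q ⨯₃ (fun j => eval q (θ j)) := by
  simp [pencilDet, cross_apply, dotProduct, Fin.sum_univ_three]

lemma eval_pencilDet_eq_zero (hA : IsArrangement A) (hθ : IsLogarithmic A θ) (hq : q ≠ 0)
    (h2 : 2 ≤ (linesThrough A q).card) : eval q (pencilDet v θ) = 0 := by
  have heval {α} (hα : α ∈ linesThrough A q) : eval (fun j => eval q (θ j)) α = 0 := by
    rw [mem_linesThrough] at hα
    obtain ⟨c, rfl⟩ := exists_eq_linForm (hA.1 α hα.1).2
    have h := (map_dvd (eval q) (hθ _ hα.1))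
    rw [hα.2, zero_dvd_iff, applyDer_linForm] at h
    rw [eval_linForm, ← h]
    simp [dotProduct]
  obtain ⟨α, hα, β, hβ, hne⟩ := Finset.one_lt_card.mp h2
  obtain ⟨t, ht⟩ := hA.eq_smul_of_eval_eq_zero (mem_linesThrough.mp hα).1
    (mem_linesThrough.mp hβ).1 hne hq (mem_linesThrough.mp hα).2 (mem_linesThrough.mp hβ).2
    (heval hα) (heval hβ)
  rw [eval_pencilDet, ht, map_smul, cross_self, smul_zero, dotProduct_zero]

lemma Qpoly_linesThrough_dvd_pencilDet (hA : IsArrangement A) (hθ : IsLogarithmic A θ) :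
    Qpoly (linesThrough A v) ∣ pencilDet v θ := by
  refine (hA.subset linesThrough_subset).Qpoly_dvd fun α hα => ?_
  rw [mem_linesThrough] at hα
  exact dvd_pencilDet (hA.1 α hα.1).2 (hA.1 α hα.1).1 hα.2 (hθ α hα.1)

section CharZero

variable [CharZero 𝕜]

lemma pencilDet_ne_zero (hA : IsArrangement A) (h0 : θ ≠ 0) (hdeg : ∀ j, (θ j).IsHomogeneous k)
    (hθ : applyDer θ (Qpoly A) = 0) (hk : k < (linesOff A v).card) : pencilDet v θ ≠ 0 := by
  intro hdet
  have hlog := isLogarithmic_of_applyDer_Qpoly_eq_zero hA hθ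
  have hoff : IsArrangement (linesOff A v) := hA.subset linesOff_subset
  have hdvd (i : Fin 3) : Qpoly (linesOff A v) ∣ (X ⨯₃ θ) i := hoff.Qpoly_dvd fun α hα => by
    rw [mem_linesOff] at hα
    exact dvd_X_cross_of_pencilDet_eq_zero (hA.1 α hα.1).2 hα.2 (hlog α hα.1) hdet i
  have hcross : X ⨯₃ θ = 0 := by
    refine eq_zero_of_dvd_of_X_dotProduct_eq_zero (dot_self_cross X θ) hdvd fun i => ?_
    rw [hoff.isHomogeneous_Qpoly.totalDegree hoff.Qpoly_ne_zero]
    exact (isHomogeneous_X_cross hdeg i).totalDegree_le.trans hk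
  refine h0 (eq_zero_of_applyDer_Qpoly_eq_zero hA ?_ (fun i j => ?_) hθ)
  · exact (Finset.card_pos.mp (Nat.zero_lt_of_lt hk)).mono linesOff_subset
  · have h (i : Fin 3) := congrFun hcross i
    have h0 := h 0
    have h1 := h 1
    have h2 := h 2
    simp only [cross_apply, cons_val, Pi.zero_apply] at h0 h1 h2
    fin_cases i <;> fin_cases j <;> grind

lemma card_linesThrough_le_of_mem_jacobianDegrees (hA : IsArrangement A)
    (hk : k ∈ jacobianDegrees A) (hoff : k < (linesOff A v).card) :
    (linesThrough A v).card ≤ k + 1 := by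
  obtain ⟨θ, h0, hdeg, hθ⟩ := hk
  have hT : IsArrangement (linesThrough A v) := hA.subset linesThrough_subset
  have hdet := pencilDet_ne_zero hA h0 hdeg hθ hoff
  have hdvd := Qpoly_linesThrough_dvd_pencilDet (v := v) hA
    (isLogarithmic_of_applyDer_Qpoly_eq_zero hA hθ)
  rw [← hT.isHomogeneous_Qpoly.totalDegree hT.Qpoly_ne_zero,
    ← (isHomogeneous_pencilDet hdeg).totalDegree hdet]
  exact totalDegree_le_of_dvd_of_isDomain hdvd hdet

lemma isModularPoint_of_mem_jacobianDegrees (hA : IsArrangement A) (hk : k ∈ jacobianDegrees A)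
    (hoff : k < (linesOff A v).card) (hcard : (linesThrough A v).card = k + 1) :
    IsModularPoint A v := by
  obtain ⟨θ, h0, hdeg, hθ⟩ := hk
  have hlog := isLogarithmic_of_applyDer_Qpoly_eq_zero hA hθ
  have hT : IsArrangement (linesThrough A v) := hA.subset linesThrough_subset
  have hdet := pencilDet_ne_zero hA h0 hdeg hθ hoff
  obtain ⟨r, hr⟩ := Qpoly_linesThrough_dvd_pencilDet (v := v) hA hlog
  have hr0 : r ≠ 0 := by
    rintro rfl
    exact hdet (by rw [hr, mul_zero])
  have hrdeg : r.totalDegree = 0 := by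
    have h := (isHomogeneous_pencilDet hdeg).totalDegree hdet
    rw [hr, totalDegree_mul_of_isDomain hT.Qpoly_ne_zero hr0,
      hT.isHomogeneous_Qpoly.totalDegree hT.Qpoly_ne_zero] at h
    omega
  intro q hq h2
  have heval := eval_pencilDet_eq_zero (v := v) hA hlog hq h2
  rw [totalDegree_eq_zero_iff_eq_C.mp hrdeg] at hr hr0
  rw [hr, map_mul, eval_C] at heval
  exact eval_Qpoly_eq_zero_iff.mp
    ((mul_eq_zero.mp heval).resolve_right fun h => hr0 (by rw [h, C_0]))

lemma card_linesOff_mem_jacobianDegrees (hA : IsArrangement A) (hne : A.Nonempty)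
    (hv : v ≠ 0) : (linesOff A v).card ∈ jacobianDegrees A := by
  have hoff : IsArrangement (linesOff A v) := hA.subset linesOff_subset
  have hlog : IsLogarithmic A (Qpoly (linesOff A v) • (C ∘ v)) := by
    intro α hα
    rw [← zero_add (_ • _), applyDer_add_smul, applyDer_C_comp v (hA.1 α hα).2]
    by_cases hαv : eval v α = 0
    · simp [hαv, applyDer]
    · refine dvd_add (by simp [applyDer]) (Dvd.dvd.mul_right ?_ _)
      exact Finset.dvd_prod_of_mem (fun β => β) (mem_linesOff.mpr ⟨hα, hαv⟩)
  obtain ⟨j, hj⟩ := Function.ne_iff.mp hv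
  obtain ⟨i, hij⟩ := exists_ne j
  refine hlog.mem_jacobianDegrees hA hne (i := i) (j := j) ?_
  have hminor : X i * (Qpoly (linesOff A v) • (C ∘ v)) j -
        X j * (Qpoly (linesOff A v) • (C ∘ v)) i =
      Qpoly (linesOff A v) * (C (v j) * X i - C (v i) * X j) := by
    simp only [Pi.smul_apply, smul_eq_mul, Function.comp_apply]
    ring
  have hdeg : (C (v j) * X i - C (v i) * X j : MvPolynomial (Fin 3) 𝕜).IsHomogeneous 1 :=
    (isHomogeneous_C_mul_X _ _).sub (isHomogeneous_C_mul_X _ _)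
  rw [hminor, homogeneousComponent_of_mem (hoff.isHomogeneous_Qpoly.mul hdeg), if_pos rfl]
  refine mul_ne_zero hoff.Qpoly_ne_zero fun h => hj ?_
  simpa [hij] using congrArg (eval (Pi.single i 1)) h

end CharZero

-- The field `u × ∇g`, where `g` defines the lines through `v` and `u ⬝ᵥ v = 1`.
lemma exists_isLogarithmic_linesThrough (hA : IsArrangement A) (hv : v ≠ 0) :
    ∃ θ, IsLogarithmic (linesThrough A v) θ ∧
      pencilDet v θ = (linesThrough A v).card • Qpoly (linesThrough A v) := by
  have hT : IsArrangement (linesThrough A v) := hA.subset linesThrough_subset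
  obtain ⟨u, hu⟩ := exists_dotProduct_eq_one hv
  set g := Qpoly (linesThrough A v)
  set G : Fin 3 → MvPolynomial (Fin 3) 𝕜 := fun j => pderiv j g
  refine ⟨(C ∘ u) ⨯₃ G, isLogarithmic_of_applyDer_Qpoly_eq_zero hT ?_, ?_⟩
  · rw [applyDer_eq_dotProduct, dotProduct_comm, dot_cross_self]
  · have hvG : (C ∘ v) ⬝ᵥ G = 0 := applyDer_Qpoly_eq_zero fun α hα => by
      rw [mem_linesThrough] at hα
      rw [applyDer_C_comp v (hA.1 α hα.1).2, hα.2, C_0]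
    have hEuler : X ⬝ᵥ G = (linesThrough A v).card • g := hT.isHomogeneous_Qpoly.sum_X_mul_pderiv
    have hvu : (C ∘ v) ⬝ᵥ (C ∘ u) = (1 : MvPolynomial (Fin 3) 𝕜) := by
      rw [← C_1, ← hu]
      simp [dotProduct]
    rw [pencilDet, cross_cross_eq_smul_sub_smul', dotProduct_sub, dotProduct_smul, dotProduct_smul,
      hvG, hvu, hEuler]
    simp

/-! ### Modular points -/

-- Both `γ` and the projection of `β` pass through `v` and the intersection point of `α` and `β`.
lemma IsModularPoint.exists_projFrom_eq_smul (hmod : IsModularPoint A v) (hA : IsArrangement A)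
    (hα : α ∈ linesOff A v) (hβ : β ∈ A) (hne : α ≠ β) :
    ∃ γ ∈ linesThrough A v, ∃ t : 𝕜, t ≠ 0 ∧ projFrom v α β = t • γ := by
  obtain ⟨hαA, hαv⟩ := mem_linesOff.mp hα
  have hα1 := (hA.1 α hαA).2
  have hβ1 := (hA.1 β hβ).2
  obtain ⟨q, hq, hαq, hβq⟩ := exists_ne_zero_eval_eq_zero hα1 hβ1
  obtain ⟨γ, hγ, hγq⟩ := hmod q hq (Finset.one_lt_card.mpr
    ⟨α, mem_linesThrough.mpr ⟨hαA, hαq⟩, β, mem_linesThrough.mpr ⟨hβ, hβq⟩, hne⟩)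
  obtain ⟨hγA, hγv⟩ := mem_linesThrough.mp hγ
  have hγ1 := (hA.1 γ hγA).2
  have hφβ : (projFrom v α β).IsHomogeneous 1 := by
    rw [projFrom_of_isHomogeneous_one v α hβ1]
    exact hβ1.sub (hα1.C_mul _)
  have hφβv : eval v (projFrom v α β) = 0 := by
    simp [projFrom_of_isHomogeneous_one v α hβ1, hαv]
  have hφβq : eval q (projFrom v α β) = 0 := by
    simp [projFrom_of_isHomogeneous_one v α hβ1, hαq, hβq]
  have hqv : LinearIndependent 𝕜 ![q, v] := (LinearIndependent.pair_iff' hq).mpr fun t ht => by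
    rw [← ht, eval_smul_of_isHomogeneous_one hα1, hαq, mul_zero] at hαv
    exact hαv rfl
  have hφβ0 : projFrom v α β ≠ 0 := fun h =>
    (hA.prime hαA).not_isUnit (hA.isRelPrime hαA hβ hne dvd_rfl
      ((dvd_iff_projFrom_eq_zero hα1 hαv).mpr h))
  obtain ⟨t, ht⟩ := exists_eq_smul_of_eval_eq_zero hqv hγ1 (hA.1 γ hγA).1 hφβ hγq hγv hφβq hφβv
  refine ⟨γ, hγ, t, ?_, ht⟩
  rintro rfl
  exact hφβ0 (by rw [ht, zero_smul])

lemma dvd_applyDer_sub_of_projFrom_eq_smul {D : Fin 3 → MvPolynomial (Fin 3) 𝕜}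
    {μ : MvPolynomial (Fin 3) 𝕜} {t : 𝕜} (hβ : β.IsHomogeneous 1) (hα : eval v α ≠ 0)
    (hβv : eval v β ≠ 0) (ht : projFrom v α β = t • γ) (hγ : applyDer D γ = γ * μ)
    (hDβ : β ∣ applyDer D β) : β ∣ applyDer D α - μ * α := by
  rw [projFrom_of_isHomogeneous_one v α hβ, ← smul_eq_C_mul, sub_eq_iff_eq_add] at ht
  set s := eval v β / eval v α
  have hs : IsUnit (C (σ := Fin 3) s) := (isUnit_iff_ne_zero.mpr (div_ne_zero hβv hα)).map C
  have hDβ_eq : applyDer D β = C s * (applyDer D α - μ * α) + β * μ := calc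
    applyDer D β = t • (γ * μ) + s • applyDer D α := by
      rw [ht, applyDer_add, applyDer_smul, applyDer_smul, hγ]
    _ = C s * (applyDer D α - μ * α) + (t • γ + s • α) * μ := by
      simp only [smul_eq_C_mul]
      ring
    _ = C s * (applyDer D α - μ * α) + β * μ := by rw [← ht]
  rw [hDβ_eq, dvd_add_left (dvd_mul_right β μ), hs.dvd_mul_left] at hDβ
  exact hDβ

lemma IsModularPoint.projFrom_Qpoly_dvd (hmod : IsModularPoint A v) (hA : IsArrangement A)
    {T : Finset (MvPolynomial (Fin 3) 𝕜)} {D : Fin 3 → MvPolynomial (Fin 3) 𝕜}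
    (hα : α ∈ linesOff A v) (hT : T ⊆ linesOff A v) (hαT : α ∉ T)
    (hD : IsLogarithmic (linesThrough A v ∪ T) D) :
    projFrom v α (Qpoly T) ∣ projFrom v α (applyDer D α) := by
  have hTA : T ⊆ A := hT.trans linesOff_subset
  obtain ⟨hαA, hαv⟩ := mem_linesOff.mp hα
  have hα1 := (hA.1 α hαA).2
  have hproj (β) (hβ : β ∈ T) : ∃ γ ∈ linesThrough A v, ∃ t : 𝕜, t ≠ 0 ∧
      projFrom v α β = t • γ :=
    hmod.exists_projFrom_eq_smul hA hα (hTA hβ) (ne_of_mem_of_not_mem hβ hαT).symm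
  choose! γ hγ t ht hproj using hproj
  rw [Qpoly, map_prod, ← Finset.prod_fiberwise_of_maps_to hγ]
  refine Finset.prod_dvd_of_isRelPrime (fun γ₁ h₁ γ₂ h₂ hne => ?_) fun γ₀ hγ₀ => ?_
  · refine IsRelPrime.prod_left fun β₁ hβ₁ => IsRelPrime.prod_right fun β₂ hβ₂ => ?_
    obtain ⟨hβ₁T, rfl⟩ := Finset.mem_filter.mp hβ₁
    obtain ⟨hβ₂T, rfl⟩ := Finset.mem_filter.mp hβ₂
    rw [hproj β₁ hβ₁T, hproj β₂ hβ₂T, smul_eq_C_mul, smul_eq_C_mul,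
      isRelPrime_mul_unit_left_left ((isUnit_iff_ne_zero.mpr (ht β₁ hβ₁T)).map C),
      isRelPrime_mul_unit_left_right ((isUnit_iff_ne_zero.mpr (ht β₂ hβ₂T)).map C)]
    exact hA.isRelPrime (linesThrough_subset h₁) (linesThrough_subset h₂) hne
  · obtain ⟨μ, hμ⟩ := hD γ₀ (Finset.mem_union_left T hγ₀)
    have hcluster : Qpoly (T.filter fun β => γ β = γ₀) ∣ applyDer D α - μ * α := by
      refine (hA.subset ((Finset.filter_subset _ T).trans hTA)).Qpoly_dvd fun β hβ => ?_
      obtain ⟨hβT, rfl⟩ := Finset.mem_filter.mp hβ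
      exact dvd_applyDer_sub_of_projFrom_eq_smul (hA.1 β (hTA hβT)).2 hαv
        (mem_linesOff.mp (hT hβT)).2 (hproj β hβT) hμ (hD β (Finset.mem_union_right _ hβT))
    have h := map_dvd (projFrom v α) hcluster
    rwa [Qpoly, map_prod, map_sub, map_mul, projFrom_self hα1 hαv, mul_zero, sub_zero] at h

lemma IsModularPoint.exists_dvd_applyDer_sub (hmod : IsModularPoint A v) (hA : IsArrangement A)
    {T : Finset (MvPolynomial (Fin 3) 𝕜)} {D : Fin 3 → MvPolynomial (Fin 3) 𝕜}
    (hα : α ∈ linesOff A v) (hT : T ⊆ linesOff A v) (hαT : α ∉ T)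
    (hD : IsLogarithmic (linesThrough A v ∪ T) D) :
    ∃ q, α ∣ applyDer D α - Qpoly T * q := by
  obtain ⟨q, hq⟩ := hmod.projFrom_Qpoly_dvd hA hα hT hαT hD
  refine ⟨q, ?_⟩
  have hsplit : applyDer D α - Qpoly T * q = (applyDer D α - projFrom v α (applyDer D α)) -
      (Qpoly T - projFrom v α (Qpoly T)) * q := by
    rw [hq]
    ring
  rw [hsplit]
  exact dvd_sub (dvd_sub_projFrom v α _) (Dvd.dvd.mul_right (dvd_sub_projFrom v α _) q)

lemma IsModularPoint.exists_isLogarithmic_insert (hmod : IsModularPoint A v)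
    (hA : IsArrangement A) {T : Finset (MvPolynomial (Fin 3) 𝕜)}
    {D : Fin 3 → MvPolynomial (Fin 3) 𝕜} (hα : α ∈ linesOff A v) (hT : T ⊆ linesOff A v)
    (hαT : α ∉ T) (hD : IsLogarithmic (linesThrough A v ∪ T) D) :
    ∃ R : MvPolynomial (Fin 3) 𝕜,
      IsLogarithmic (linesThrough A v ∪ insert α T) (D + R • (C ∘ v)) := by
  obtain ⟨hαA, hαv⟩ := mem_linesOff.mp hα
  obtain ⟨q, hq⟩ := hmod.exists_dvd_applyDer_sub hA hα hT hαT hD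
  have happly (R) {β} (hβ : β ∈ A) :
      applyDer (D + R • (C ∘ v)) β = applyDer D β + R * C (eval v β) := by
    rw [applyDer_add_smul, applyDer_C_comp v (hA.1 β hβ).2]
  refine ⟨-(Qpoly T * q * C (eval v α)⁻¹), fun β hβ => ?_⟩
  rw [Finset.union_insert, Finset.mem_insert, Finset.mem_union] at hβ
  rcases hβ with rfl | hβ | hβ
  · have hinv : C (eval v β)⁻¹ * C (eval v β) = (1 : MvPolynomial (Fin 3) 𝕜) := by
      rw [← C_mul, inv_mul_cancel₀ hαv, C_1]
    rwa [happly _ hαA, neg_mul, mul_assoc, hinv, mul_one, ← sub_eq_add_neg]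
  · rw [happly _ (linesThrough_subset hβ), (mem_linesThrough.mp hβ).2, C_0, mul_zero, add_zero]
    exact hD β (Finset.mem_union_left T hβ)
  · have hβT : β ∣ Qpoly T := Finset.dvd_prod_of_mem (fun β => β) hβ
    rw [happly _ (linesOff_subset (hT hβ))]
    exact dvd_add (hD β (Finset.mem_union_right _ hβ))
      (((hβT.mul_right q).mul_right _).neg_right.mul_right _)

lemma IsModularPoint.exists_isLogarithmic_add_smul (hmod : IsModularPoint A v)
    (hA : IsArrangement A) (hθ : IsLogarithmic (linesThrough A v) θ) :
    ∃ P : MvPolynomial (Fin 3) 𝕜, IsLogarithmic A (θ + P • (C ∘ v)) := by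
  suffices h : ∀ T ⊆ linesOff A v, ∃ P : MvPolynomial (Fin 3) 𝕜,
      IsLogarithmic (linesThrough A v ∪ T) (θ + P • (C ∘ v)) by
    simpa only [linesThrough_union_linesOff] using h _ Finset.Subset.rfl
  intro T
  induction T using Finset.induction_on with
  | empty => exact fun _ => ⟨0, by simpa using hθ⟩
  | insert α T hαT ih =>
    intro hT
    obtain ⟨hα, hT⟩ := Finset.insert_subset_iff.mp hT
    obtain ⟨P, hP⟩ := ih hT
    obtain ⟨R, hR⟩ := hmod.exists_isLogarithmic_insert hA hα hT hαT hP
    exact ⟨P + R, by rwa [add_smul, ← add_assoc]⟩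

lemma pencilDet_add_smul (v : Fin 3 → 𝕜) (θ : Fin 3 → MvPolynomial (Fin 3) 𝕜)
    (P : MvPolynomial (Fin 3) 𝕜) : pencilDet v (θ + P • (C ∘ v)) = pencilDet v θ := by
  rw [pencilDet, map_add, map_smul, dotProduct_add, dotProduct_smul, dot_cross_self, smul_zero,
    add_zero, pencilDet]

lemma IsLogarithmic.mem_jacobianDegrees_of_pencilDet [CharZero 𝕜] (hθ : IsLogarithmic A θ)
    (hA : IsArrangement A) (hne : A.Nonempty)
    (hk : homogeneousComponent (k + 1) (pencilDet v θ) ≠ 0) : k ∈ jacobianDegrees A := by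
  by_contra hmem
  have hminor (i j : Fin 3) : homogeneousComponent (k + 1) (X i * θ j - X j * θ i) = 0 :=
    not_not.mp (mt (hθ.mem_jacobianDegrees hA hne) hmem)
  have hcross (i : Fin 3) : homogeneousComponent (k + 1) ((X ⨯₃ θ) i) = 0 := by
    rw [cross_apply]
    fin_cases i <;> exact hminor _ _
  refine hk ?_
  simp only [pencilDet, dotProduct, Function.comp_apply, map_sum, homogeneousComponent_C_mul,
    hcross, mul_zero, Finset.sum_const_zero]

lemma IsModularPoint.mem_jacobianDegrees [CharZero 𝕜] (hmod : IsModularPoint A v)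
    (hA : IsArrangement A) (hv : v ≠ 0) (hk : (linesThrough A v).card = k + 1) :
    k ∈ jacobianDegrees A := by
  have hT : IsArrangement (linesThrough A v) := hA.subset linesThrough_subset
  obtain ⟨θ, hθ, hdet⟩ := exists_isLogarithmic_linesThrough hA hv
  obtain ⟨P, hP⟩ := hmod.exists_isLogarithmic_add_smul hA hθ
  have hne : (linesThrough A v).Nonempty := Finset.card_pos.mp (by omega)
  refine hP.mem_jacobianDegrees_of_pencilDet (v := v) hA (hne.mono linesThrough_subset) ?_
  rw [pencilDet_add_smul, hdet, hk, map_nsmul, ← hk,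
    homogeneousComponent_of_mem hT.isHomogeneous_Qpoly, if_pos rfl]
  exact smul_ne_zero hne.card_ne_zero hT.Qpoly_ne_zero

/-! ### Intersection points -/

/-- The intersection points of `A`, each encoded by the set of lines of `A` through it. -/
noncomputable def intersectionPoints (A : Finset (MvPolynomial (Fin 3) 𝕜)) :
    Finset (Finset (MvPolynomial (Fin 3) 𝕜)) :=
  A.powerset.filter fun T => ∃ v : Fin 3 → 𝕜, v ≠ 0 ∧ T = linesThrough A v ∧ 2 ≤ T.card

lemma mem_intersectionPoints {T : Finset (MvPolynomial (Fin 3) 𝕜)} :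
    T ∈ intersectionPoints A ↔
      ∃ v : Fin 3 → 𝕜, v ≠ 0 ∧ T = linesThrough A v ∧ 2 ≤ T.card := by
  rw [intersectionPoints, Finset.mem_filter, Finset.mem_powerset, and_iff_right_iff_imp]
  rintro ⟨v, -, rfl, -⟩
  exact linesThrough_subset

lemma IsArrangement.isLinearSpace_intersectionPoints (hA : IsArrangement A) :
    IsLinearSpace A (intersectionPoints A) where
  subset T hT := Finset.mem_powerset.mp (Finset.mem_filter.mp hT).1
  one_lt_card T hT := by
    obtain ⟨-, -, -, h2⟩ := mem_intersectionPoints.mp hT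
    exact h2
  exists_mem α hα β hβ hne := by
    obtain ⟨q, hq, hαq, hβq⟩ := exists_ne_zero_eval_eq_zero (hA.1 α hα).2 (hA.1 β hβ).2
    have hαT : α ∈ linesThrough A q := mem_linesThrough.mpr ⟨hα, hαq⟩
    have hβT : β ∈ linesThrough A q := mem_linesThrough.mpr ⟨hβ, hβq⟩
    exact ⟨linesThrough A q, mem_intersectionPoints.mpr
      ⟨q, hq, rfl, Finset.one_lt_card.mpr ⟨α, hαT, β, hβT, hne⟩⟩, hαT, hβT⟩
  eq_of_mem T hT T' hT' α hα β hβ hne := by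
    obtain ⟨v, hv, rfl, -⟩ := mem_intersectionPoints.mp hT
    obtain ⟨w, hw, rfl, -⟩ := mem_intersectionPoints.mp hT'
    simp only [Finset.mem_inter, mem_linesThrough] at hα hβ
    obtain ⟨t, rfl⟩ :=
      hA.eq_smul_of_eval_eq_zero hα.1.1 hβ.1.1 hne hv hα.1.2 hβ.1.2 hα.2.2 hβ.2.2
    ext γ
    rw [mem_linesThrough, mem_linesThrough, and_congr_right_iff]
    intro hγ
    rw [eval_smul_of_isHomogeneous_one (hA.1 γ hγ).2, mul_eq_zero,
      or_iff_right (left_ne_zero_of_smul hw)]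

lemma isModularPoint_iff :
    IsModularPoint A v ↔ ∀ T ∈ intersectionPoints A, ¬Disjoint T (linesThrough A v) := by
  simp only [IsModularPoint, mem_intersectionPoints, Finset.not_disjoint_iff]
  constructor
  · rintro h _ ⟨q, hq, rfl, h2⟩
    obtain ⟨γ, hγ, hγq⟩ := h q hq h2
    exact ⟨γ, mem_linesThrough.mpr ⟨(mem_linesThrough.mp hγ).1, hγq⟩, hγ⟩
  · intro h q hq h2
    obtain ⟨γ, hγq, hγ⟩ := h _ ⟨q, hq, rfl, h2⟩
    exact ⟨γ, hγ, (mem_linesThrough.mp hγq).2⟩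

lemma nPoints_eq_card_filter (A : Finset (MvPolynomial (Fin 3) 𝕜)) (j : ℕ) :
    nPoints A j = ((intersectionPoints A).filter fun T => T.card = j).card := by
  rw [nPoints, ← Set.ncard_coe_finset]
  congr 1
  ext T
  simp only [Set.mem_ofPred_eq, Finset.coe_filter, mem_intersectionPoints, linesThrough]
  tauto

lemma sum_nPoints_mul_sub_one (A : Finset (MvPolynomial (Fin 3) 𝕜)) :
    ∑ j ∈ Finset.range (A.card + 1), nPoints A j * (j - 1) =
      ∑ T ∈ intersectionPoints A, (T.card - 1) := by
  have hmaps (T) (hT : T ∈ intersectionPoints A) : T.card ∈ Finset.range (A.card + 1) :=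
    Finset.mem_range_succ_iff.mpr
      (Finset.card_le_card (Finset.mem_powerset.mp (Finset.mem_filter.mp hT).1))
  rw [← Finset.sum_fiberwise_of_maps_to hmaps]
  refine Finset.sum_congr rfl fun j _ => ?_
  rw [nPoints_eq_card_filter]
  exact (Finset.sum_const_nat fun T hT => by rw [(Finset.mem_filter.mp hT).2]).symm

lemma IsArrangement.isModularPoint_iff_sum_nPoints (hA : IsArrangement A) (hv : v ≠ 0)
    (h2 : 2 ≤ (linesThrough A v).card) :
    IsModularPoint A v ↔ ∑ j ∈ Finset.range (A.card + 1), nPoints A j * (j - 1) =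
      ((linesThrough A v).card - 1) + (linesThrough A v).card * (linesOff A v).card := by
  rw [sum_nPoints_mul_sub_one, isModularPoint_iff,
    ← hA.isLinearSpace_intersectionPoints.sum_card_sub_one_eq_iff
      (mem_intersectionPoints.mpr ⟨v, hv, rfl, h2⟩),
    ← card_linesThrough_add_card_linesOff (A := A) (v := v), Nat.add_sub_cancel_left]

lemma exists_card_linesThrough_eq {j : ℕ} (h : nPoints A j ≠ 0) :
    ∃ v : Fin 3 → 𝕜, v ≠ 0 ∧ (linesThrough A v).card = j := by
  obtain ⟨T, v, hv, rfl, -, hj⟩ := Set.nonempty_of_ncard_ne_zero h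
  exact ⟨v, hv, hj⟩

lemma maxMult_spec (h : maxMult A ≠ 0) : 2 ≤ maxMult A ∧ nPoints A (maxMult A) ≠ 0 := by
  suffices maxMult A ∈ {j | 2 ≤ j ∧ nPoints A j ≠ 0} from this
  refine Nat.sSup_mem (Set.nonempty_iff_ne_empty.mpr fun hempty => h ?_) ⟨A.card, ?_⟩
  · rw [maxMult, hempty, csSup_empty, bot_eq_zero]
  · rintro j ⟨-, hj⟩
    obtain ⟨v, -, rfl⟩ := exists_card_linesThrough_eq hj
    exact Finset.card_le_card linesThrough_subset

/-! ### The value of `r(A)` -/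

section Mdr

variable [CharZero 𝕜]

lemma mdr_eq_card_linesOff (hA : IsArrangement A) (hv : v ≠ 0)
    (h : (linesOff A v).card < (linesThrough A v).card) : mdr A = (linesOff A v).card := by
  refine IsLeast.csInf_eq (a := (linesOff A v).card) ⟨?_, fun k hk => ?_⟩
  · exact card_linesOff_mem_jacobianDegrees hA
      ((Finset.card_pos.mp (Nat.zero_lt_of_lt h)).mono linesThrough_subset) hv
  · by_contra! hlt
    have := card_linesThrough_le_of_mem_jacobianDegrees hA hk hlt
    omega

lemma mdr_eq_ite_isModularPoint (hA : IsArrangement A) (hv : v ≠ 0)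
    (hT : (linesThrough A v).card = k + 1) (hoff : (linesOff A v).card = k + 1) :
    mdr A = if IsModularPoint A v then k else k + 1 := by
  have hlower {r : ℕ} (hr : r ∈ jacobianDegrees A) : k ≤ r := by
    by_contra! hlt
    have := card_linesThrough_le_of_mem_jacobianDegrees (v := v) hA hr (by omega)
    omega
  split_ifs with hmod
  · exact IsLeast.csInf_eq ⟨hmod.mem_jacobianDegrees hA hv hT, fun r hr => hlower hr⟩
  · refine IsLeast.csInf_eq ⟨hoff ▸ card_linesOff_mem_jacobianDegrees hA ?_ hv, fun r hr => ?_⟩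
    · exact (Finset.card_pos.mp (by omega)).mono (linesThrough_subset (v := v))
    · have hrk : r ≠ k := by
        rintro rfl
        exact hmod (isModularPoint_of_mem_jacobianDegrees hA hr (by omega) hT)
      have := hlower hr
      omega

lemma mdr_eq_of_card_le_two_mul (hA : IsArrangement A) {m : ℕ} (h2 : 2 ≤ m)
    (hm : nPoints A m ≠ 0) (hd : A.card ≤ 2 * m) :
    mdr A = if A.card < 2 * m then A.card - m
      else if ∑ j ∈ Finset.range (A.card + 1), nPoints A j * (j - 1) = (m - 1) + m * m then m - 1
      else m := by
  obtain ⟨v, hv, rfl⟩ := exists_card_linesThrough_eq hm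
  have hsplit := card_linesThrough_add_card_linesOff (A := A) (v := v)
  obtain hlt | heq := hd.lt_or_eq
  · rw [if_pos hlt, mdr_eq_card_linesOff hA hv (by omega)]
    omega
  · obtain ⟨k, hk⟩ := Nat.exists_eq_add_of_lt h2
    have hoff : (linesOff A v).card = (linesThrough A v).card := by omega
    have hiff := hA.isModularPoint_iff_sum_nPoints hv h2
    rw [hoff] at hiff
    rw [if_neg heq.not_lt, mdr_eq_ite_isModularPoint hA hv hk (hoff.trans hk)]
    simp only [hiff, hk, Nat.add_sub_cancel]

end Mdr

end Points

lemma mdr_empty {𝕜 : Type*} [Field 𝕜] [NeZero ℓ] :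
    mdr (∅ : Finset (MvPolynomial (Fin ℓ) 𝕜)) = 0 := by
  refine Nat.sInf_eq_zero.mpr (Or.inl ⟨1, one_ne_zero, fun _ => isHomogeneous_one _ _, ?_⟩)
  exact applyDer_Qpoly_eq_zero fun α hα => absurd hα (Finset.notMem_empty α)

theorem mdr_weak_combinatorics_general {K₁ K₂ : Type*} [Field K₁] [CharZero K₁] [Field K₂]
    [CharZero K₂] {A : Finset (MvPolynomial (Fin 3) K₁)} {B : Finset (MvPolynomial (Fin 3) K₂)}
    (hA : IsArrangement A) (hB : IsArrangement B) (hcard : A.card = B.card)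
    (hweak : ∀ j, 2 ≤ j → nPoints A j = nPoints B j) (hm : A.card ≤ 2 * maxMult A) :
    mdr A = mdr B := by
  by_cases h0 : maxMult A = 0
  · obtain rfl : A = ∅ := Finset.card_eq_zero.mp (by omega)
    obtain rfl : B = ∅ := Finset.card_eq_zero.mp hcard.symm
    rw [mdr_empty, mdr_empty]
  · obtain ⟨h2, hmA⟩ := maxMult_spec h0
    have hmB : nPoints B (maxMult A) ≠ 0 := hweak _ h2 ▸ hmA
    have hsum : ∑ j ∈ Finset.range (A.card + 1), nPoints A j * (j - 1) =
        ∑ j ∈ Finset.range (A.card + 1), nPoints B j * (j - 1) := by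
      refine Finset.sum_congr rfl fun j _ => ?_
      obtain hj | hj := lt_or_ge j 2
      · rw [Nat.sub_eq_zero_of_le (Nat.le_of_lt_succ hj), mul_zero, mul_zero]
      · rw [hweak j hj]
    rw [mdr_eq_of_card_le_two_mul hA h2 hmA hm, hsum, hcard,
      ← mdr_eq_of_card_le_two_mul hB h2 hmB (hcard ▸ hm)]

/-- Let `A` and `B` be essential line arrangements of `d` lines in `P^2`
having the same weak combinatorics, i.e. `n_j(A) = n_j(B)` for every `j ≥ 2`.
If `2·m(A) ≥ d`, where `m(A)` is the maximal multiplicity of an intersection point of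
`A`, then `r(A) = r(B)`. -/
theorem mdr_weak_combinatorics (d : ℕ) (A B : Finset (MvPolynomial (Fin 3) K))
    (hA : IsArrangement A) (hAess : IsEssential A)
    (hB : IsArrangement B) (hBess : IsEssential B)
    (hcardA : A.card = d) (hcardB : B.card = d)
    (hweak : ∀ j, 2 ≤ j → nPoints A j = nPoints B j)
    (hm : d ≤ 2 * maxMult A) :
    mdr A = mdr B := by
  subst hcardA
  exact mdr_weak_combinatorics_general hA hB hcardB.symm hweak hm
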